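/- A smooth function f ∈ C^∞(ℝ^N) belongs to O_{M,ω}(ℝ^N) if and only if for every g ∈ S_ω(ℝ^N) and every m ∈ ℕ, q_{m,g}(f) := sup_{α∈ℕ₀^N} sup_{x∈ℝ^N} |g(x)|·|∂^α f(x)|·exp(−m·φ*_ω(|α|/m)) < ∞. -/

import Mathlib

open Real Set Filter

noncomputable section

abbrev Euc (N : ℕ) := EuclideanSpace ℝ (Fin N)

/-- single partial derivative in direction `i` -/
noncomputable def pd {N : ℕ} (i : Fin N) (f : Euc N → ℝ) : Euc N → ℝ :=
  fun x => fderiv ℝ f x (EuclideanSpace.single i 1)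

/-- iterated partial derivative `∂^α` for a multi-index `α` -/
noncomputable def pdm {N : ℕ} (α : Fin N → ℕ) (f : Euc N → ℝ) : Euc N → ℝ :=
  ((List.ofFn fun i : Fin N => (pd i)^[α i]).foldr (· ∘ ·) id) f

/-- length `|α|` of a multi-index -/
def msize {N : ℕ} (α : Fin N → ℕ) : ℕ := ∑ i, α i

/-- the Young conjugate `φ*_ω(s) = sup_{t ≥ 0} (s t - ω(e^t))` -/
noncomputable def phiStar (ω : ℝ → ℝ) (s : ℝ) : ℝ :=
  sSup {y : ℝ | ∃ t : ℝ, 0 ≤ t ∧ y = s * t - ω (Real.exp t)}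

/-- non-quasianalytic weight function in the sense of Braun-Meise-Taylor -/
structure IsWeightFun (ω : ℝ → ℝ) : Prop where
  nonneg : ∀ t, 0 ≤ t → 0 ≤ ω t
  cont : ContinuousOn ω (Ici 0)
  mono : MonotoneOn ω (Ici 0)
  alpha : ∃ K : ℝ, 1 ≤ K ∧ ∀ t, 0 ≤ t → ω (2 * t) ≤ K * (1 + ω t)
  beta : MeasureTheory.IntegrableOn (fun t => ω t / (1 + t ^ 2)) (Ici 1)
  gamma : ∃ a : ℝ, ∃ b : ℝ, 0 < b ∧ ∀ t, 0 ≤ t → a + b * Real.log (1 + t) ≤ ω t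
  delta : ConvexOn ℝ univ (fun t => ω (Real.exp t))

/-- membership in `𝒮_ω(ℝ^N)` -/
def MemS (ω : ℝ → ℝ) {N : ℕ} (f : Euc N → ℝ) : Prop :=
  ContDiff ℝ (⊤ : ℕ∞) f ∧ ∀ lam mu : ℝ, 0 < lam → 0 < mu → ∃ C : ℝ,
    ∀ (α : Fin N → ℕ) (x : Euc N),
      Real.exp (mu * ω ‖x‖) * |pdm α f x| ≤ C * Real.exp (lam * phiStar ω (msize α / lam))

/-- membership in `ℰ_ω(ℝ^N)` -/
def MemE (ω : ℝ → ℝ) {N : ℕ} (f : Euc N → ℝ) : Prop :=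
  ContDiff ℝ (⊤ : ℕ∞) f ∧ ∀ K : Set (Euc N), IsCompact K → ∀ m : ℕ, 0 < m → ∃ C : ℝ,
    ∀ (α : Fin N → ℕ), ∀ x ∈ K, |pdm α f x| ≤ C * Real.exp (m * phiStar ω (msize α / m))

/-- membership in `𝒟_ω(ℝ^N)` -/
def MemD (ω : ℝ → ℝ) {N : ℕ} (f : Euc N → ℝ) : Prop :=
  MemE ω f ∧ HasCompactSupport f

/-- membership in `𝒪_{M,ω}(ℝ^N)`: slowly increasing functions of Beurling type -/
def MemOM (ω : ℝ → ℝ) {N : ℕ} (f : Euc N → ℝ) : Prop :=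
  ContDiff ℝ (⊤ : ℕ∞) f ∧ ∀ m : ℕ, 0 < m → ∃ C : ℝ, 0 < C ∧ ∃ n : ℕ,
    ∀ (α : Fin N → ℕ) (x : Euc N),
      |pdm α f x| ≤ C * Real.exp (n * ω ‖x‖ + m * phiStar ω (msize α / m))

/-- the weighted sup norm `r_{m,n}` -/
noncomputable def rNorm (ω : ℝ → ℝ) {N : ℕ} (m : ℕ) (n : ℤ) (f : Euc N → ℝ) : ℝ :=
  ⨆ p : (Fin N → ℕ) × Euc N,
    |pdm p.1 f p.2| * Real.exp (-(n : ℝ) * ω ‖p.2‖ - m * phiStar ω (msize p.1 / m))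

/-- finiteness of the norm `r_{m,n}` -/
def rBdd (ω : ℝ → ℝ) {N : ℕ} (m : ℕ) (n : ℤ) (f : Euc N → ℝ) : Prop :=
  BddAbove (Set.range fun p : (Fin N → ℕ) × Euc N =>
    |pdm p.1 f p.2| * Real.exp (-(n : ℝ) * ω ‖p.2‖ - m * phiStar ω (msize p.1 / m)))

/-- membership in `𝒪^m_{n,ω}(ℝ^N)` -/
def MemOmn (ω : ℝ → ℝ) {N : ℕ} (m : ℕ) (n : ℤ) (f : Euc N → ℝ) : Prop :=
  ContDiff ℝ (⊤ : ℕ∞) f ∧ rBdd ω m n f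

/-- the norm `q_{λ,μ}` of `𝒮_ω(ℝ^N)` -/
noncomputable def qNorm (ω : ℝ → ℝ) {N : ℕ} (lam mu : ℝ) (f : Euc N → ℝ) : ℝ :=
  ⨆ p : (Fin N → ℕ) × Euc N,
    Real.exp (-(lam * phiStar ω (msize p.1 / lam)) + mu * ω ‖p.2‖) * |pdm p.1 f p.2|

/-- finiteness of the norm `q_{m,g}` -/
def qgBdd (ω : ℝ → ℝ) {N : ℕ} (m : ℕ) (g f : Euc N → ℝ) : Prop :=
  BddAbove (Set.range fun p : (Fin N → ℕ) × Euc N =>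
    |g p.2| * |pdm p.1 f p.2| * Real.exp (-(m : ℝ) * phiStar ω (msize p.1 / m)))

end

/-- A one-dimensional kernel listed together with all its derivatives: a nonnegative function,
positive at the origin. -/
structure IsDerivFamily (h : ℕ → ℝ → ℝ) : Prop where
  hasDerivAt : ∀ k t, HasDerivAt (h k) (h (k + 1) t) t
  nonneg : ∀ t, 0 ≤ h 0 t
  pos : 0 < h 0 0

/-- The polynomials `p` with `(d/dt)^k exp (-t²/2) = p k t * exp (-t²/2)`. -/
noncomputable def gaussPoly : ℕ → ℝ → ℝ
  | 0 => fun _ => 1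
  | 1 => fun t => -t
  | k + 2 => fun t => -t * gaussPoly (k + 1) t - (k + 1) * gaussPoly k t

theorem hasDerivAt_gaussPoly (k : ℕ) (t : ℝ) :
    HasDerivAt (gaussPoly k) (-k * gaussPoly (k - 1) t) t := by
  induction k using Nat.strong_induction_on with
  | _ k ih =>
    match k, ih with
    | 0, _ => simpa [gaussPoly] using hasDerivAt_const t (1 : ℝ)
    | 1, _ => simpa [gaussPoly] using hasDerivAt_neg t
    | k + 2, ih =>
      have h := ((hasDerivAt_neg t).mul (ih (k + 1) (by omega))).sub
        ((ih k (by omega)).const_mul ((k : ℝ) + 1))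
      refine h.congr_deriv ?_
      cases k with
      | zero => simp [gaussPoly]; ring
      | succ k => simp [gaussPoly]; ring

theorem abs_gaussPoly_le (k : ℕ) (t : ℝ) : |gaussPoly k t| ≤ (|t| + k) ^ k := by
  induction k using Nat.strong_induction_on with
  | _ k ih =>
    match k, ih with
    | 0, _ => simp [gaussPoly]
    | 1, _ => simp [gaussPoly]
    | k + 2, ih =>
      have h1 := ih (k + 1) (by omega)
      have h0 := ih k (by omega)
      push_cast at h1 ⊢
      have ht := abs_nonneg t
      have hk : (0 : ℝ) ≤ k := k.cast_nonneg
      set A := |t| + (k : ℝ) + 2 with hA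
      have e1 : (|t| + ((k : ℝ) + 1)) ^ (k + 1) ≤ A ^ (k + 1) := by
        gcongr; linarith
      have e0 : (|t| + (k : ℝ)) ^ k ≤ A ^ k := by
        gcongr; linarith
      calc |gaussPoly (k + 2) t| ≤ |t| * |gaussPoly (k + 1) t| + (k + 1) * |gaussPoly k t| := by
            have h2 : (0 : ℝ) ≤ k + 1 := by positivity
            simp only [gaussPoly]
            refine (abs_sub _ _).trans ?_
            rw [abs_mul, abs_mul, abs_neg, abs_of_nonneg h2]
        _ ≤ |t| * A ^ (k + 1) + A * A ^ k := by
            gcongr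
            · exact h1.trans e1
            · linarith
            · exact h0.trans e0
        _ = (|t| + 1) * A ^ (k + 1) := by ring
        _ ≤ A * A ^ (k + 1) := by gcongr; linarith
        _ = (|t| + ((k : ℝ) + 2)) ^ (k + 2) := by rw [hA]; ring

theorem exists_derivFamily_gaussian :
    ∃ h : ℕ → ℝ → ℝ, IsDerivFamily h ∧ ∃ C : ℝ, 0 < C ∧
      ∀ k t, |h k t| ≤ C * (Real.exp k * k.factorial * Real.exp (-|t|)) := by
  refine ⟨fun k t => gaussPoly k t * Real.exp (-(t ^ 2 / 2)), ⟨fun k t => ?_, fun t => ?_, ?_⟩,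
    Real.exp 2, Real.exp_pos _, fun k t => ?_⟩
  · have h1 : HasDerivAt (fun t : ℝ => Real.exp (-(t ^ 2 / 2))) (Real.exp (-(t ^ 2 / 2)) * (-t)) t := by
      refine HasDerivAt.exp ?_
      refine ((hasDerivAt_pow 2 t).div_const 2).neg.congr_deriv ?_
      norm_num
    refine ((hasDerivAt_gaussPoly k t).mul h1).congr_deriv ?_
    cases k with
    | zero => simp [gaussPoly]; ring
    | succ k => simp [gaussPoly]; ring
  · simp only [gaussPoly]; positivity
  · simp [gaussPoly]
  · rw [abs_mul, Real.abs_exp]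
    have h1 : (|t| + k) ^ k ≤ k.factorial * Real.exp (|t| + k) := by
      have := Real.pow_div_factorial_le_exp (|t| + k) (by positivity) k
      rwa [div_le_iff₀' (by positivity)] at this
    have h2 : Real.exp (-(t ^ 2 / 2)) ≤ Real.exp (2 - 2 * |t|) := by
      apply Real.exp_le_exp.2
      nlinarith [sq_nonneg (|t| - 2), sq_abs t]
    calc |gaussPoly k t| * Real.exp (-(t ^ 2 / 2))
        ≤ (k.factorial * Real.exp (|t| + k)) * Real.exp (2 - 2 * |t|) := by
          gcongr
          exact (abs_gaussPoly_le k t).trans h1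
      _ = k.factorial * (Real.exp (|t| + k) * Real.exp (2 - 2 * |t|)) := by ring
      _ = k.factorial * (Real.exp 2 * Real.exp k * Real.exp (-|t|)) := by
          rw [← Real.exp_add, ← Real.exp_add, ← Real.exp_add]; ring_nf
      _ = _ := by ring

/-- The moments `∫ ξ^k φ(ξ) cos (t ξ + θ) dξ` over `[-1, 1]`. -/
noncomputable def trigMoment (φ : ℝ → ℝ) (k : ℕ) (θ t : ℝ) : ℝ :=
  ∫ ξ in (-1 : ℝ)..1, ξ ^ k * φ ξ * Real.cos (t * ξ + θ)

theorem hasDerivAt_trigMoment {φ : ℝ → ℝ} (hφ : Continuous φ) (k : ℕ) (θ t : ℝ) :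
    HasDerivAt (trigMoment φ k θ) (trigMoment φ (k + 1) (θ + π / 2) t) t := by
  refine (intervalIntegral.hasDerivAt_integral_of_dominated_loc_of_deriv_le
    (F := fun t ξ => ξ ^ k * φ ξ * Real.cos (t * ξ + θ))
    (F' := fun t ξ => ξ ^ (k + 1) * φ ξ * Real.cos (t * ξ + (θ + π / 2)))
    (bound := fun ξ => |ξ ^ (k + 1) * φ ξ|)
    univ_mem (Eventually.of_forall fun x => ?_) ?_ ?_ ?_ ?_ ?_).2
  · exact (by fun_prop : Continuous _).aestronglyMeasurable
  · exact (by fun_prop : Continuous _).intervalIntegrable _ _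
  · exact (by fun_prop : Continuous _).aestronglyMeasurable
  · refine Eventually.of_forall fun ξ _ x _ => ?_
    rw [norm_mul]
    exact mul_le_of_le_one_right (norm_nonneg _) (Real.abs_cos_le_one _)
  · exact (by fun_prop : Continuous _).intervalIntegrable _ _
  · refine Eventually.of_forall fun ξ _ x _ => ?_
    have h := (((hasDerivAt_id x).mul_const ξ).add_const θ).cos.const_mul (ξ ^ k * φ ξ)
    refine h.congr_deriv ?_
    rw [← add_assoc, Real.cos_add_pi_div_two]
    simp; ring

theorem mul_trigMoment {φ : ℝ → ℝ} (hφ : ContDiff ℝ (⊤ : ℕ∞) φ) (h1 : φ 1 = 0) (h2 : φ (-1) = 0)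
    (k : ℕ) (θ t : ℝ) :
    t * trigMoment φ k θ t = k * trigMoment φ (k - 1) (θ + π / 2) t
      + trigMoment (deriv φ) k (θ + π / 2) t := by
  have hd : Differentiable ℝ φ := hφ.differentiable (by simp)
  have hc : Continuous φ := hφ.continuous
  have hc' : Continuous (deriv φ) := hφ.continuous_deriv (by simp)
  have ibp := intervalIntegral.integral_mul_deriv_eq_deriv_mul (a := -1) (b := 1)
    (u := fun ξ => ξ ^ k * φ ξ) (u' := fun ξ => (k * ξ ^ (k - 1)) * φ ξ + ξ ^ k * deriv φ ξ)
    (v := fun ξ => Real.sin (t * ξ + θ)) (v' := fun ξ => Real.cos (t * ξ + θ) * t)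
    (fun ξ _ => (hasDerivAt_pow k ξ).mul (hd ξ).hasDerivAt)
    (fun ξ _ => by
      have := (((hasDerivAt_id ξ).const_mul t).add_const θ).sin
      simpa using this)
    ((by fun_prop : Continuous _).intervalIntegrable _ _)
    ((by fun_prop : Continuous _).intervalIntegrable _ _)
  simp only [h1, h2, mul_zero, zero_mul, sub_zero, zero_sub] at ibp
  have e1 : t * trigMoment φ k θ t
      = ∫ ξ in (-1 : ℝ)..1, ξ ^ k * φ ξ * (Real.cos (t * ξ + θ) * t) := by
    rw [trigMoment, ← intervalIntegral.integral_const_mul]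
    congr 1; ext ξ; ring
  rw [e1, ibp, trigMoment, trigMoment, ← intervalIntegral.integral_const_mul,
    ← intervalIntegral.integral_add ((by fun_prop : Continuous _).intervalIntegrable _ _)
      ((by fun_prop : Continuous _).intervalIntegrable _ _), ← intervalIntegral.integral_neg]
  congr 1; ext ξ
  rw [← add_assoc, Real.cos_add_pi_div_two]; ring

theorem exists_abs_trigMoment_le (M : ℕ) : ∀ φ : ℝ → ℝ, ContDiff ℝ (⊤ : ℕ∞) φ →
    tsupport φ ⊆ Metric.closedBall 0 (1 / 4) → ∀ p : ℕ, ∃ C : ℝ, ∀ (k : ℕ) (θ t : ℝ),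
      ((k : ℝ) + 1) ^ p * 2 ^ k * |t| ^ M * |trigMoment φ k θ t| ≤ C := by
  induction M with
  | zero =>
    intro φ hφ hs p
    have hcs : HasCompactSupport φ :=
      (isCompact_closedBall (0 : ℝ) (1 / 4)).of_isClosed_subset (isClosed_tsupport φ) hs
    obtain ⟨B, hB⟩ := hcs.exists_bound_of_continuous hφ.continuous
    have hB0 : 0 ≤ B := (norm_nonneg _).trans (hB 0)
    obtain ⟨D, hD⟩ : ∃ D : ℝ, ∀ k : ℕ, ((k : ℝ) + 1) ^ p * (1 / 2) ^ k ≤ D := by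
      obtain ⟨D, hD⟩ := (tendsto_pow_const_mul_const_pow_of_abs_lt_one p
        (r := 1 / 2) (by rw [abs_of_pos] <;> norm_num)).bddAbove_range
      refine ⟨2 * D, fun k => ?_⟩
      have := hD ⟨k + 1, rfl⟩
      simp only [pow_succ] at this
      push_cast at this
      linarith
    refine ⟨D * (2 * B), fun k θ t => ?_⟩
    have hJ : |trigMoment φ k θ t| ≤ (1 / 4) ^ k * B * |1 - (-1 : ℝ)| := by
      rw [← Real.norm_eq_abs, trigMoment]
      refine intervalIntegral.norm_integral_le_of_norm_le_const fun ξ _ => ?_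
      by_cases hξ : ξ ∈ tsupport φ
      · have h4 : |ξ| ≤ 1 / 4 := by simpa using hs hξ
        rw [norm_mul, norm_mul, norm_pow]
        refine (mul_le_of_le_one_right (by positivity) (Real.abs_cos_le_one _)).trans ?_
        gcongr
        · exact h4
        · exact hB ξ
      · rw [image_eq_zero_of_notMem_tsupport hξ]
        simp only [mul_zero, zero_mul, norm_zero]
        positivity
    have h4 : (1 / 4 : ℝ) ^ k = (1 / 2) ^ k * (1 / 2) ^ k := by rw [← mul_pow]; norm_num
    have h5 : (2 : ℝ) ^ k * (1 / 2) ^ k = 1 := by rw [← mul_pow]; norm_num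
    calc ((k : ℝ) + 1) ^ p * 2 ^ k * |t| ^ 0 * |trigMoment φ k θ t|
        ≤ ((k : ℝ) + 1) ^ p * 2 ^ k * |t| ^ 0 * ((1 / 4) ^ k * B * |1 - (-1 : ℝ)|) := by gcongr
      _ = (((k : ℝ) + 1) ^ p * (1 / 2) ^ k) * (2 * B) * (2 ^ k * (1 / 2) ^ k) := by
          rw [h4]; norm_num; ring
      _ ≤ D * (2 * B) := by rw [h5, mul_one]; gcongr; exact hD k
  | succ M ih =>
    intro φ hφ hs p
    obtain ⟨C₁, hC₁⟩ := ih φ hφ hs (p + 1)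
    obtain ⟨C₂, hC₂⟩ := ih (deriv φ) ((contDiff_infty_iff_deriv.1 hφ).2)
      (tsupport_deriv_subset.trans hs) p
    have hz : ∀ ξ : ℝ, 1 / 4 < |ξ| → φ ξ = 0 := fun ξ hξ =>
      image_eq_zero_of_notMem_tsupport fun h => hξ.not_ge (by simpa using hs h)
    have h1 := hz 1 (by norm_num)
    have h2 := hz (-1) (by norm_num)
    refine ⟨2 ^ (p + 1) * C₁ + C₂, fun k θ t => ?_⟩
    have hC₁0 : 0 ≤ C₁ := le_trans (by positivity) (hC₁ 0 0 0)
    have key : ((k : ℝ) + 1) ^ p * 2 ^ k * |t| ^ M * (k * |trigMoment φ (k - 1) (θ + π / 2) t|)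
        ≤ 2 ^ (p + 1) * C₁ := by
      cases k with
      | zero => simp; positivity
      | succ k =>
        have hk : ((k + 1 : ℕ) : ℝ) + 1 ≤ 2 * ((k : ℝ) + 1) := by
          push_cast; linarith [k.cast_nonneg (α := ℝ)]
        calc (((k + 1 : ℕ) : ℝ) + 1) ^ p * 2 ^ (k + 1) * |t| ^ M
              * (((k + 1 : ℕ) : ℝ) * |trigMoment φ k (θ + π / 2) t|)
            ≤ (2 * ((k : ℝ) + 1)) ^ p * 2 ^ (k + 1) * |t| ^ M
              * (((k + 1 : ℕ) : ℝ) * |trigMoment φ k (θ + π / 2) t|) := by gcongr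
          _ = 2 ^ (p + 1) * (((k : ℝ) + 1) ^ (p + 1) * 2 ^ k * |t| ^ M
              * |trigMoment φ k (θ + π / 2) t|) := by
              rw [mul_pow]; push_cast; ring
          _ ≤ _ := by gcongr; exact hC₁ _ _ _
    calc ((k : ℝ) + 1) ^ p * 2 ^ k * |t| ^ (M + 1) * |trigMoment φ k θ t|
        = ((k : ℝ) + 1) ^ p * 2 ^ k * |t| ^ M * |t * trigMoment φ k θ t| := by
          rw [abs_mul]; ring
      _ ≤ ((k : ℝ) + 1) ^ p * 2 ^ k * |t| ^ M * (k * |trigMoment φ (k - 1) (θ + π / 2) t|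
          + |trigMoment (deriv φ) k (θ + π / 2) t|) := by
          gcongr
          rw [mul_trigMoment hφ h1 h2]
          refine (abs_add_le _ _).trans ?_
          rw [abs_mul, Nat.abs_cast]
      _ ≤ _ := by
          rw [mul_add]
          exact add_le_add key (hC₂ _ _ _)

theorem exists_derivFamily_bandlimited :
    ∃ h : ℕ → ℝ → ℝ, IsDerivFamily h ∧
      ∀ M : ℕ, ∃ C : ℝ, ∀ k t, |h k t| * (1 + |t|) ^ M ≤ C := by
  let φ : ContDiffBump (0 : ℝ) := ⟨1 / 8, 1 / 4, by norm_num, by norm_num⟩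
  have hφ : ContDiff ℝ (⊤ : ℕ∞) φ := φ.contDiff
  have hs : tsupport φ ⊆ Metric.closedBall 0 (1 / 4) := φ.tsupport_eq.subset
  let A : ℕ → ℝ → ℝ := fun k => trigMoment φ k (k * (π / 2))
  have hA : ∀ k t, HasDerivAt (A k) (A (k + 1) t) t := fun k t => by
    have := hasDerivAt_trigMoment hφ.continuous k (k * (π / 2)) t
    refine this.congr_deriv ?_
    simp only [A]; push_cast; ring_nf
  have hder : ∀ k, deriv (A k) = A (k + 1) := fun k => funext fun t => (hA k t).deriv
  have hit : ∀ k, iteratedDeriv k (A 0) = A k := fun k => by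
    induction k with
    | zero => simp
    | succ k ih => rw [iteratedDeriv_succ, ih, hder]
  have hAs : ContDiff ℝ (⊤ : ℕ∞) (A 0) :=
    contDiff_of_differentiable_iteratedDeriv fun k _ => by
      rw [hit]; exact fun t => (hA k t).differentiableAt
  have hA0 : 0 < A 0 0 := by
    have : A 0 0 = ∫ ξ in (-1 : ℝ)..1, φ ξ := by simp [A, trigMoment]
    rw [this]
    exact intervalIntegral.integral_pos (by norm_num) φ.continuous.continuousOn
      (fun _ _ => φ.nonneg) ⟨0, by norm_num, φ.pos_of_mem_ball (by simp [φ.rOut_pos])⟩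
  have hbd : ∀ M : ℕ, ∃ C : ℝ, ∀ k t, 2 ^ k * |A k t| * (1 + |t|) ^ M ≤ C := fun M => by
    obtain ⟨C₁, h₁⟩ := exists_abs_trigMoment_le M φ hφ hs 0
    obtain ⟨C₀, h₀⟩ := exists_abs_trigMoment_le 0 φ hφ hs 0
    refine ⟨2 ^ (M - 1) * (C₀ + C₁), fun k t => ?_⟩
    have e := add_pow_le zero_le_one (abs_nonneg t) M
    have e₁ := h₁ k (k * (π / 2)) t
    have e₀ := h₀ k (k * (π / 2)) t
    rw [one_pow] at e
    calc 2 ^ k * |A k t| * (1 + |t|) ^ M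
        ≤ 2 ^ k * |A k t| * (2 ^ (M - 1) * (1 + |t| ^ M)) := by gcongr
      _ = 2 ^ (M - 1) * (((k : ℝ) + 1) ^ 0 * 2 ^ k * |t| ^ 0 * |A k t|
          + ((k : ℝ) + 1) ^ 0 * 2 ^ k * |t| ^ M * |A k t|) := by ring
      _ ≤ _ := by gcongr
  have hsq : ContDiff ℝ (⊤ : ℕ∞) (fun t => A 0 t * A 0 t) := hAs.mul hAs
  refine ⟨fun k => iteratedDeriv k (fun t => A 0 t * A 0 t), ⟨fun k t => ?_, fun t => ?_, ?_⟩,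
    fun M => ?_⟩
  · rw [iteratedDeriv_succ]
    exact ((hsq.differentiable_iteratedDeriv k (by exact_mod_cast ENat.natCast_lt_top k)) t).hasDerivAt
  · simpa using mul_self_nonneg (A 0 t)
  · simpa using hA0.ne'
  · obtain ⟨C, hC⟩ := hbd M
    obtain ⟨C', hC'⟩ := hbd 0
    refine ⟨C * C', fun k t => ?_⟩
    have hC0 : 0 ≤ C := le_trans (by positivity) (hC 0 0)
    have hL := norm_iteratedFDeriv_mul_le hAs hAs t (n := k) (by exact_mod_cast le_top)
    simp only [norm_iteratedFDeriv_eq_norm_iteratedDeriv, hit, Real.norm_eq_abs] at hL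
    calc |iteratedDeriv k (fun t => A 0 t * A 0 t) t| * (1 + |t|) ^ M
        ≤ (∑ i ∈ Finset.range (k + 1), (k.choose i : ℝ) * |A i t| * |A (k - i) t|)
          * (1 + |t|) ^ M := by gcongr
      _ = ∑ i ∈ Finset.range (k + 1), (k.choose i : ℝ) * (1 / 2) ^ k *
          ((2 ^ i * |A i t| * (1 + |t|) ^ M) * (2 ^ (k - i) * |A (k - i) t| * (1 + |t|) ^ 0)) := by
          rw [Finset.sum_mul]
          refine Finset.sum_congr rfl fun i hi => ?_
          have hp : (2 : ℝ) ^ k = 2 ^ i * 2 ^ (k - i) := by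
            rw [← pow_add]; congr 1; have := Finset.mem_range.1 hi; omega
          have hq : (1 / 2 : ℝ) ^ k * (2 ^ i * 2 ^ (k - i)) = 1 := by
            rw [← hp, ← mul_pow]; norm_num
          linear_combination (-((k.choose i : ℝ) * |A i t| * |A (k - i) t| * (1 + |t|) ^ M)) * hq
      _ ≤ ∑ i ∈ Finset.range (k + 1), (k.choose i : ℝ) * (1 / 2) ^ k * (C * C') := by
          gcongr with i hi
          · exact hC _ _
          · exact hC' _ _
      _ = C * C' := by
          rw [← Finset.sum_mul, ← Finset.sum_mul, ← Nat.cast_sum, Nat.sum_range_choose]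
          push_cast
          rw [← mul_pow]; norm_num

/-- A function on `ℝ^N` listed together with all its partial derivatives. -/
def IsPartialFamily {N : ℕ} (E : (Fin N → ℕ) → Euc N → ℝ) : Prop :=
  ∀ α x, HasFDerivAt (E α)
    (∑ i, E (α + Pi.single i 1) x • (EuclideanSpace.proj i : Euc N →L[ℝ] ℝ)) x

/-- The bounds defining `𝒮_ω`, for a family indexed by multi-indices. -/
def HasWeightedDecay (ω : ℝ → ℝ) {N : ℕ} (E : (Fin N → ℕ) → Euc N → ℝ) : Prop :=
  ∀ lam mu : ℝ, 0 < lam → 0 < mu → ∃ C : ℝ, ∀ (α : Fin N → ℕ) (x : Euc N),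
    Real.exp (mu * ω ‖x‖) * |E α x| ≤ C * Real.exp (lam * phiStar ω (msize α / lam))

theorem IsPartialFamily.pd_eq {N : ℕ} {E : (Fin N → ℕ) → Euc N → ℝ} (hE : IsPartialFamily E)
    (i : Fin N) (α : Fin N → ℕ) : pd i (E α) = E (α + Pi.single i 1) := by
  ext x
  simp [pd, (hE α x).fderiv]

theorem IsPartialFamily.iterate_pd_eq {N : ℕ} {E : (Fin N → ℕ) → Euc N → ℝ}
    (hE : IsPartialFamily E) (i : Fin N) (a : ℕ) (α : Fin N → ℕ) :
    (pd i)^[a] (E α) = E (α + Pi.single i a) := by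
  induction a with
  | zero => simp
  | succ a ih => rw [Function.iterate_succ_apply', ih, hE.pd_eq, add_assoc, ← Pi.single_add]

theorem IsPartialFamily.pdm_eq {N : ℕ} {E : (Fin N → ℕ) → Euc N → ℝ} (hE : IsPartialFamily E)
    (α : Fin N → ℕ) : pdm α (E 0) = E α := by
  have key : ∀ (l : List (Fin N)) (β : Fin N → ℕ),
      ((l.map fun i => (pd i)^[α i]).foldr (· ∘ ·) id) (E β)
        = E (β + (l.map fun i => Pi.single i (α i)).sum) := by
    intro l β
    induction l with
    | nil => simp
    | cons i l ih =>
      simp only [List.map_cons, List.foldr_cons, Function.comp_apply, List.sum_cons]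
      rw [ih, hE.iterate_pd_eq, add_assoc, add_comm (List.sum _)]
  have hsum : ((List.finRange N).map fun i => (Pi.single i (α i) : Fin N → ℕ)).sum = α := by
    rw [← List.ofFn_eq_map, List.sum_ofFn]
    exact Finset.univ_sum_single α
  rw [pdm, List.ofFn_eq_map, key, hsum, zero_add]

theorem IsPartialFamily.contDiff {N : ℕ} {E : (Fin N → ℕ) → Euc N → ℝ} (hE : IsPartialFamily E)
    (α : Fin N → ℕ) : ContDiff ℝ (⊤ : ℕ∞) (E α) := by
  refine contDiff_infty.2 fun n => ?_
  induction n generalizing α with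
  | zero =>
    exact contDiff_zero.2 (continuous_iff_continuousAt.2 fun x => (hE α x).continuousAt)
  | succ n ih =>
    push_cast
    refine contDiff_succ_iff_fderiv.2 ⟨fun x => (hE α x).differentiableAt, by simp, ?_⟩
    rw [show fderiv ℝ (E α) = fun x => _ from funext fun x => (hE α x).fderiv]
    exact ContDiff.sum fun i _ => (ih _).smul contDiff_const

theorem IsPartialFamily.memS {ω : ℝ → ℝ} {N : ℕ} {E : (Fin N → ℕ) → Euc N → ℝ}
    (hE : IsPartialFamily E) (hd : HasWeightedDecay ω E) : MemS ω (E 0) :=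
  ⟨hE.contDiff 0, by simpa only [hE.pdm_eq, HasWeightedDecay] using hd⟩

theorem IsDerivFamily.isPartialFamily {h : ℕ → ℝ → ℝ} (hh : IsDerivFamily h) (N : ℕ) :
    IsPartialFamily (fun (α : Fin N → ℕ) (x : Euc N) => ∏ i, h (α i) (x i)) := by
  intro α x
  have h1 : ∀ i ∈ Finset.univ, HasFDerivAt (fun x : Euc N => h (α i) (x i))
      (h (α i + 1) (x i) • (EuclideanSpace.proj i : Euc N →L[ℝ] ℝ)) x := fun i _ =>
    (hh.hasDerivAt (α i) (x i)).comp_hasFDerivAt x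
      (EuclideanSpace.proj i : Euc N →L[ℝ] ℝ).hasFDerivAt
  refine (HasFDerivAt.finsetProd h1).congr_fderiv (Finset.sum_congr rfl fun i _ => ?_)
  beta_reduce
  rw [smul_smul, ← Finset.prod_erase_mul Finset.univ _ (Finset.mem_univ i)]
  congr 2
  · refine Finset.prod_congr rfl fun j hj => ?_
    simp [Pi.single_eq_of_ne (Finset.ne_of_mem_erase hj)]
  · simp

theorem IsPartialFamily.tsum_translate {N : ℕ} {E : (Fin N → ℕ) → Euc N → ℝ}
    (hE : IsPartialFamily E) (hb : ∀ α, ∃ B : ℝ, ∀ x, |E α x| ≤ B) {c : ℕ → ℝ}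
    (hc : Summable c) (hc0 : ∀ j, 0 ≤ c j) (z : ℕ → Euc N) :
    IsPartialFamily (fun α x => ∑' j, c j * E α (x - z j)) := by
  choose B hB using hb
  have hsm : ∀ α x, Summable fun j => c j * E α (x - z j) := fun α x => by
    refine Summable.of_norm_bounded (hc.mul_right (B α)) fun j => ?_
    rw [norm_mul, Real.norm_of_nonneg (hc0 j)]
    exact mul_le_mul_of_nonneg_left (hB _ _) (hc0 j)
  intro α x
  have key := hasFDerivAt_tsum (𝕜 := ℝ) (f := fun j (x : Euc N) => c j * E α (x - z j))
    (f' := fun j x => ∑ i, (c j * E (α + Pi.single i 1) (x - z j)) •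
      (EuclideanSpace.proj i : Euc N →L[ℝ] ℝ)) (x₀ := x)
    (hc.mul_right (∑ i, B (α + Pi.single i 1) * ‖(EuclideanSpace.proj i : Euc N →L[ℝ] ℝ)‖))
    (fun j x => ?_) (fun j x => ?_) (hsm α x) x
  · refine key.congr_fderiv ?_
    rw [Summable.tsum_finsetSum fun i _ => (hsm _ x).smul_const _]
    exact Finset.sum_congr rfl fun i _ => (hsm _ x).tsum_smul_const _
  · have := ((hE α (x - z j)).comp x ((hasFDerivAt_id x).sub_const (z j))).const_mul (c j)
    refine this.congr_fderiv ?_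
    ext v
    simp [Finset.mul_sum, mul_assoc]
  · refine (norm_sum_le _ _).trans ?_
    rw [Finset.mul_sum]
    gcongr with i
    rw [norm_smul, norm_mul, Real.norm_of_nonneg (hc0 j), mul_assoc]
    gcongr
    · exact hc0 j
    · exact hB _ _

theorem IsWeightFun.exists_add_le {ω : ℝ → ℝ} (hω : IsWeightFun ω) :
    ∃ K : ℝ, 1 ≤ K ∧ ∀ s t, 0 ≤ s → 0 ≤ t → ω (s + t) ≤ K * (1 + ω s + ω t) := by
  obtain ⟨K, hK, h⟩ := hω.alpha
  refine ⟨K, hK, fun s t hs ht => ?_⟩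
  have key : ∀ r, 0 ≤ r → s + t ≤ 2 * r → ω r ≤ ω s + ω t → ω (s + t) ≤ K * (1 + ω s + ω t) := by
    intro r hr hle hr'
    calc ω (s + t) ≤ ω (2 * r) := hω.mono (add_nonneg hs ht : (0 : ℝ) ≤ s + t)
          (by simpa using hr) hle
      _ ≤ K * (1 + ω r) := h r hr
      _ ≤ K * (1 + ω s + ω t) :=
          mul_le_mul_of_nonneg_left (by linarith) (by linarith)
  rcases le_total s t with hst | hst
  · exact key t ht (by linarith) (by linarith [hω.nonneg s hs])
  · exact key s hs (by linarith) (by linarith [hω.nonneg t ht])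

theorem HasWeightedDecay.exists_bound {ω : ℝ → ℝ} (hω : IsWeightFun ω) {N : ℕ}
    {E : (Fin N → ℕ) → Euc N → ℝ} (hd : HasWeightedDecay ω E) (α : Fin N → ℕ) :
    ∃ B : ℝ, ∀ x, |E α x| ≤ B := by
  obtain ⟨C, hC⟩ := hd 1 1 one_pos one_pos
  refine ⟨_, fun x => le_trans ?_ (hC α x)⟩
  refine le_mul_of_one_le_left (abs_nonneg _) (Real.one_le_exp ?_)
  simpa using hω.nonneg _ (norm_nonneg x)

theorem HasWeightedDecay.tsum_translate {ω : ℝ → ℝ} (hω : IsWeightFun ω) {N : ℕ}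
    {E : (Fin N → ℕ) → Euc N → ℝ} (hd : HasWeightedDecay ω E) (z : ℕ → Euc N) :
    HasWeightedDecay ω
      (fun α x => ∑' j, (1 / 2) ^ j * Real.exp (-(j * ω ‖z j‖)) * E α (x - z j)) := by
  intro lam mu hlam hmu
  obtain ⟨K, hK, hadd⟩ := hω.exists_add_le
  have hK0 : 0 < K := by linarith
  obtain ⟨C, hC⟩ := hd lam (mu * K) hlam (by positivity)
  have hC0 : 0 ≤ C := by
    have := le_trans (by positivity) (hC 0 0)
    exact nonneg_of_mul_nonneg_left this (Real.exp_pos _)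
  have hz : ∀ j, 0 ≤ ω ‖z j‖ := fun j => hω.nonneg _ (norm_nonneg _)
  obtain ⟨D, hD⟩ : ∃ D : ℝ, ∀ j : ℕ, Real.exp ((mu * K - j) * ω ‖z j‖) ≤ D := by
    obtain ⟨J, hJ⟩ := exists_nat_ge (mu * K)
    refine ⟨1 + ∑ j ∈ Finset.range J, Real.exp ((mu * K - j) * ω ‖z j‖), fun j => ?_⟩
    rcases lt_or_ge j J with hj | hj
    · have := Finset.single_le_sum (f := fun j : ℕ => Real.exp ((mu * K - j) * ω ‖z j‖))
        (fun i _ => (Real.exp_pos _).le) (Finset.mem_range.2 hj)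
      linarith
    · have h1 : Real.exp ((mu * K - j) * ω ‖z j‖) ≤ 1 := by
        rw [Real.exp_le_one_iff]
        have : (J : ℝ) ≤ j := by exact_mod_cast hj
        exact mul_nonpos_of_nonpos_of_nonneg (by linarith) (hz j)
      have h2 : 0 ≤ ∑ j ∈ Finset.range J, Real.exp ((mu * K - j) * ω ‖z j‖) := by positivity
      linarith
  have hD0 : 0 ≤ D := (Real.exp_pos _).le.trans (hD 0)
  refine ⟨2 * (Real.exp (mu * K) * D * C), fun α x => ?_⟩
  set P := Real.exp (lam * phiStar ω (msize α / lam)) with hP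
  have hterm : ∀ j, Real.exp (mu * ω ‖x‖) *
      ‖(1 / 2 : ℝ) ^ j * Real.exp (-(j * ω ‖z j‖)) * E α (x - z j)‖
        ≤ (1 / 2) ^ j * (Real.exp (mu * K) * D * C * P) := by
    intro j
    have htri : ω ‖x‖ ≤ K * (1 + ω ‖z j‖ + ω ‖x - z j‖) := by
      refine le_trans (hω.mono (norm_nonneg x) ?_ ?_) (hadd _ _ (norm_nonneg _) (norm_nonneg _))
      · exact add_nonneg (norm_nonneg _) (norm_nonneg _)
      · simpa using norm_add_le (z j) (x - z j)
    have hexp : Real.exp (mu * ω ‖x‖) * Real.exp (-(j * ω ‖z j‖)) ≤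
        Real.exp (mu * K) * D * Real.exp (mu * K * ω ‖x - z j‖) := by
      refine le_trans ?_ (mul_le_mul_of_nonneg_right
        (mul_le_mul_of_nonneg_left (hD j) (Real.exp_pos _).le) (Real.exp_pos _).le)
      rw [← Real.exp_add, ← Real.exp_add, ← Real.exp_add]
      refine Real.exp_le_exp.2 ?_
      have := mul_le_mul_of_nonneg_left htri hmu.le
      linarith
    rw [norm_mul, norm_mul, Real.norm_of_nonneg (Real.exp_pos _).le,
      Real.norm_of_nonneg (by positivity : (0 : ℝ) ≤ (1 / 2) ^ j), Real.norm_eq_abs]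
    calc Real.exp (mu * ω ‖x‖) * ((1 / 2) ^ j * Real.exp (-(j * ω ‖z j‖)) * |E α (x - z j)|)
        = (1 / 2) ^ j * ((Real.exp (mu * ω ‖x‖) * Real.exp (-(j * ω ‖z j‖)))
            * |E α (x - z j)|) := by ring
      _ ≤ (1 / 2) ^ j * ((Real.exp (mu * K) * D * Real.exp (mu * K * ω ‖x - z j‖))
            * |E α (x - z j)|) := by gcongr
      _ = (1 / 2) ^ j * (Real.exp (mu * K) * D *
            (Real.exp (mu * K * ω ‖x - z j‖) * |E α (x - z j)|)) := by ring
      _ ≤ (1 / 2) ^ j * (Real.exp (mu * K) * D * (C * P)) := by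
          exact mul_le_mul_of_nonneg_left
            (mul_le_mul_of_nonneg_left (hC α _) (by positivity)) (by positivity)
      _ = _ := by ring
  have hg := hasSum_geometric_two.mul_right (Real.exp (mu * K) * D * C * P)
  have hle : ∀ j, ‖(1 / 2 : ℝ) ^ j * Real.exp (-(j * ω ‖z j‖)) * E α (x - z j)‖
      ≤ (1 / 2) ^ j * (Real.exp (mu * K) * D * C * P) * Real.exp (-(mu * ω ‖x‖)) := fun j => by
    rw [Real.exp_neg (mu * ω ‖x‖), ← div_eq_mul_inv, le_div_iff₀' (Real.exp_pos _)]
    exact hterm j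
  have hT := tsum_of_norm_bounded (hg.mul_right (Real.exp (-(mu * ω ‖x‖)))) hle
  rw [Real.norm_eq_abs, Real.exp_neg (mu * ω ‖x‖), ← div_eq_mul_inv, le_div_iff₀' (Real.exp_pos _)] at hT
  exact hT.trans_eq (by ring)

theorem phiStar_nonneg {ω : ℝ → ℝ} (h1 : ω 1 = 0) (s : ℝ) : 0 ≤ phiStar ω s := by
  by_cases hb : BddAbove {y : ℝ | ∃ t : ℝ, 0 ≤ t ∧ y = s * t - ω (Real.exp t)}
  · exact le_csSup hb ⟨0, le_rfl, by simp [h1]⟩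
  · exact (Real.sSup_of_not_bddAbove hb).ge

theorem IsWeightFun.exists_le_mul_add {ω : ℝ → ℝ} (hω : IsWeightFun ω) {ε : ℝ} (hε : 0 < ε) :
    ∃ C : ℝ, ∀ t, 0 ≤ t → ω t ≤ ε * t + C := by
  set g : ℝ → ℝ := fun t => ω t / (1 + t ^ 2) with hg
  have hint : MeasureTheory.IntegrableOn g (Ioi 1) := hω.beta.mono_set Ioi_subset_Ici_self
  have hii : ∀ a b, 1 ≤ a → a ≤ b → IntervalIntegrable g MeasureTheory.volume a b :=
    fun a b ha hab => by
      rw [intervalIntegrable_iff_integrableOn_Ioc_of_le hab]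
      exact hint.mono_set fun x hx => lt_of_le_of_lt ha hx.1
  have hl1 := MeasureTheory.intervalIntegral_tendsto_integral_Ioi 1 hint tendsto_id
  have hl2 := MeasureTheory.intervalIntegral_tendsto_integral_Ioi 1 hint
    (tendsto_id.const_mul_atTop (zero_lt_two' ℝ))
  have hl := hl2.sub hl1
  rw [sub_self] at hl
  obtain ⟨T₀, hT₀⟩ := eventually_atTop.1
    ((hl.eventually_lt_const (by positivity : 0 < ε / 5)).and (eventually_ge_atTop 1))
  have key : ∀ T, T₀ ≤ T → ω T ≤ ε * T := by
    intro T hT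
    obtain ⟨h1, h2⟩ := hT₀ T hT
    have hT0 : 0 < T := by linarith
    simp only [id] at h1
    rw [← intervalIntegral.integral_add_adjacent_intervals (hii 1 T le_rfl h2)
      (hii T (2 * T) h2 (by linarith)), add_sub_cancel_left] at h1
    have h3 : ∫ _ in T..(2 * T), ω T / (5 * T ^ 2) ≤ ∫ t in T..(2 * T), g t := by
      refine intervalIntegral.integral_mono_on (by linarith) (by simp) (hii _ _ h2 (by linarith))
        fun t ht => ?_
      have ht0 : 0 ≤ t := by linarith [ht.1]
      have hωt : ω T ≤ ω t := hω.mono hT0.le ht0 ht.1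
      refine div_le_div₀ (hω.nonneg t ht0) hωt (by positivity) ?_
      nlinarith [ht.1, ht.2]
    rw [intervalIntegral.integral_const, smul_eq_mul] at h3
    have h4 : (2 * T - T) * (ω T / (5 * T ^ 2)) = ω T / (5 * T) := by
      field_simp; ring
    rw [h4] at h3
    have h5 := (div_lt_iff₀ (by positivity)).1 (h3.trans_lt h1)
    linarith
  refine ⟨ω (max T₀ 0), fun t ht => ?_⟩
  have hm : 0 ≤ max T₀ 0 := le_max_right _ _
  rcases le_total t (max T₀ 0) with h | h
  · have := hω.mono ht hm h
    have : 0 ≤ ε * t := by positivity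
    linarith
  · have := key t ((le_max_left _ _).trans h)
    have := hω.nonneg _ hm
    linarith

/-- Either the Young conjugate is finite everywhere, or `ω` grows at most logarithmically. -/
theorem IsWeightFun.bddAbove_or_le_mul {ω : ℝ → ℝ} (hω : IsWeightFun ω) (h1 : ω 1 = 0) :
    (∀ s : ℝ, BddAbove {y : ℝ | ∃ t : ℝ, 0 ≤ t ∧ y = s * t - ω (Real.exp t)}) ∨
      ∃ s : ℝ, 0 ≤ s ∧ ∀ t, 0 ≤ t → ω (Real.exp t) ≤ s * t := by
  refine or_iff_not_imp_left.2 fun h => ?_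
  push Not at h
  obtain ⟨s, hs⟩ := h
  refine ⟨max s 0, le_max_right _ _, fun t₁ ht₁ => ?_⟩
  by_contra! hlt
  have ht₁' : 0 < t₁ := by
    refine lt_of_le_of_ne ht₁ fun h0 => ?_
    rw [← h0] at hlt
    simp [h1] at hlt
  refine hs ⟨max s 0 * t₁, ?_⟩
  rintro _ ⟨t, ht, rfl⟩
  have hst : s * t ≤ max s 0 * t := by gcongr; exact le_max_left _ _
  rcases le_total t t₁ with h | h
  · have := hω.nonneg _ (Real.exp_pos t).le
    have : max s 0 * t ≤ max s 0 * t₁ := by gcongr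
    linarith
  · have ht' : 0 < t := ht₁'.trans_le h
    have ha : 0 ≤ 1 - t₁ / t := by rw [sub_nonneg, div_le_one ht']; exact h
    have hb : 0 ≤ t₁ / t := by positivity
    have hconv := hω.delta.2 (mem_univ 0) (mem_univ t) ha hb (by ring)
    simp only [smul_eq_mul, mul_zero, zero_add, div_mul_cancel₀ _ ht'.ne', Real.exp_zero, h1] at hconv
    rw [div_mul_eq_mul_div, le_div_iff₀ ht'] at hconv
    have h3 : max s 0 * t₁ * t < t₁ * ω (Real.exp t) :=
      lt_of_lt_of_le (by gcongr) hconv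
    have h4 : max s 0 * t < ω (Real.exp t) := by
      refine lt_of_mul_lt_mul_left (a := t₁) ?_ ht₁
      linarith
    have : 0 ≤ max s 0 * t₁ := by positivity
    linarith

theorem exists_exp_mul_factorial_le {ω : ℝ → ℝ} (hω : IsWeightFun ω) (h1 : ω 1 = 0)
    (hb : ∀ s : ℝ, BddAbove {y : ℝ | ∃ t : ℝ, 0 ≤ t ∧ y = s * t - ω (Real.exp t)})
    {lam : ℝ} (hlam : 0 < lam) :
    ∃ C : ℝ, 0 ≤ C ∧ ∀ k : ℕ,
      Real.exp k * k.factorial ≤ C * Real.exp (lam * phiStar ω (k / lam)) := by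
  obtain ⟨c, hc⟩ := hω.exists_le_mul_add (ε := (lam * Real.exp 2)⁻¹) (by positivity)
  refine ⟨1 + Real.exp (lam * c), by positivity, fun k => ?_⟩
  rcases Nat.eq_zero_or_pos k with rfl | hk
  · have := Real.one_le_exp (mul_nonneg hlam.le (phiStar_nonneg h1 ((0 : ℕ) / lam)))
    have h0 := Real.exp_pos (lam * c)
    simp only [Nat.cast_zero, Real.exp_zero, Nat.factorial_zero, Nat.cast_one, mul_one] at this ⊢
    nlinarith
  · have hk1 : (1 : ℝ) ≤ k := by exact_mod_cast hk
    have hk0 : (0 : ℝ) < k := by linarith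
    set t := 2 + Real.log k with ht
    have ht0 : 0 ≤ t := by have := Real.log_nonneg hk1; linarith
    have het : Real.exp t = Real.exp 2 * k := by rw [ht, Real.exp_add, Real.exp_log hk0]
    have h2 : k / lam * t - ω (Real.exp t) ≤ phiStar ω (k / lam) := le_csSup (hb _) ⟨t, ht0, rfl⟩
    have h3 := hc _ (Real.exp_pos t).le
    have h4 : (lam * Real.exp 2)⁻¹ * Real.exp t = k / lam := by
      rw [het]; field_simp
    rw [h4] at h3
    have h5 : k + k * Real.log k ≤ lam * c + lam * phiStar ω (k / lam) := by
      have h6 : lam * (k / lam * t - (k / lam + c)) ≤ lam * phiStar ω (k / lam) := by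
        gcongr; linarith
      have h7 : lam * (k / lam * t - (k / lam + c)) = k * t - k - lam * c := by
        field_simp; ring
      rw [h7, ht] at h6
      linarith
    calc Real.exp k * k.factorial ≤ Real.exp k * (k : ℝ) ^ k := by
          gcongr; exact_mod_cast k.factorial_le_pow
      _ = Real.exp (k + k * Real.log k) := by
          rw [Real.exp_add, Real.exp_nat_mul (Real.log k), Real.exp_log hk0]
      _ ≤ Real.exp (lam * c) * Real.exp (lam * phiStar ω (k / lam)) := by
          rw [← Real.exp_add]; exact Real.exp_le_exp.2 h5
      _ ≤ _ := by gcongr; linarith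

theorem euc_norm_le_sum {N : ℕ} (x : Euc N) : ‖x‖ ≤ ∑ i, |x i| := by
  have h0 : 0 ≤ ∑ i, |x i| := Finset.sum_nonneg fun i _ => abs_nonneg _
  rw [EuclideanSpace.norm_eq]
  refine Real.sqrt_le_iff.2 ⟨h0, ?_⟩
  exact Finset.sum_sq_le_sq_sum_of_nonneg fun i _ => abs_nonneg _

theorem exists_family_of_bddAbove {ω : ℝ → ℝ} (hω : IsWeightFun ω) (h1 : ω 1 = 0)
    (hb : ∀ s : ℝ, BddAbove {y : ℝ | ∃ t : ℝ, 0 ≤ t ∧ y = s * t - ω (Real.exp t)}) (N : ℕ) :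
    ∃ h : ℕ → ℝ → ℝ, IsDerivFamily h ∧
      HasWeightedDecay ω (fun (α : Fin N → ℕ) (x : Euc N) => ∏ i, h (α i) (x i)) := by
  obtain ⟨h, hh, C, hC0, hC⟩ := exists_derivFamily_gaussian
  refine ⟨h, hh, fun lam mu hlam hmu => ?_⟩
  obtain ⟨D, hD0, hD⟩ := exists_exp_mul_factorial_le hω h1 hb hlam
  obtain ⟨c, hc⟩ := hω.exists_le_mul_add (inv_pos.2 hmu)
  refine ⟨Real.exp (mu * c) * C ^ N * D, fun α x => ?_⟩
  have hexp : Real.exp (mu * ω ‖x‖) ≤ Real.exp ‖x‖ * Real.exp (mu * c) := by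
    rw [← Real.exp_add]
    refine Real.exp_le_exp.2 ?_
    have := mul_le_mul_of_nonneg_left (hc _ (norm_nonneg x)) hmu.le
    rwa [mul_add, mul_inv_cancel_left₀ hmu.ne'] at this
  have hprod : |∏ i, h (α i) (x i)|
      ≤ C ^ N * (Real.exp (msize α) * (msize α).factorial) * Real.exp (-‖x‖) := by
    rw [Finset.abs_prod]
    calc ∏ i, |h (α i) (x i)|
        ≤ ∏ i, C * (Real.exp (α i) * (α i).factorial * Real.exp (-|x i|)) :=
          Finset.prod_le_prod (fun _ _ => abs_nonneg _) fun i _ => hC _ _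
      _ = C ^ N * (Real.exp (msize α) * ((∏ i, (α i).factorial : ℕ) : ℝ))
            * Real.exp (-∑ i, |x i|) := by
          simp only [Finset.prod_mul_distrib, ← Real.exp_sum, Finset.prod_const, Finset.card_univ,
            Fintype.card_fin, msize, Nat.cast_sum, Nat.cast_prod, Finset.sum_neg_distrib]
          ring
      _ ≤ _ := by
          gcongr
          · exact Nat.le_of_dvd (Nat.factorial_pos _)
              (Nat.prod_factorial_dvd_factorial_sum Finset.univ α)
          · exact euc_norm_le_sum x
  calc Real.exp (mu * ω ‖x‖) * |∏ i, h (α i) (x i)|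
      ≤ (Real.exp ‖x‖ * Real.exp (mu * c)) *
        (C ^ N * (Real.exp (msize α) * (msize α).factorial) * Real.exp (-‖x‖)) := by gcongr
    _ = (Real.exp ‖x‖ * Real.exp (-‖x‖)) * (Real.exp (mu * c) * C ^ N *
        (Real.exp (msize α) * (msize α).factorial)) := by ring
    _ ≤ 1 * (Real.exp (mu * c) * C ^ N * (D * Real.exp (lam * phiStar ω (msize α / lam)))) := by
        rw [← Real.exp_add, add_neg_cancel, Real.exp_zero]
        refine mul_le_mul_of_nonneg_left (mul_le_mul_of_nonneg_left (hD _) ?_) zero_le_one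
        positivity
    _ = _ := by ring

theorem exists_family_of_le_mul {ω : ℝ → ℝ} (hvan : ∀ t ∈ Set.Icc (0 : ℝ) 1, ω t = 0)
    {s : ℝ} (hs0 : 0 ≤ s) (hs : ∀ t, 0 ≤ t → ω (Real.exp t) ≤ s * t) (N : ℕ) :
    ∃ h : ℕ → ℝ → ℝ, IsDerivFamily h ∧
      HasWeightedDecay ω (fun (α : Fin N → ℕ) (x : Euc N) => ∏ i, h (α i) (x i)) := by
  obtain ⟨h, hh, hC⟩ := exists_derivFamily_bandlimited
  refine ⟨h, hh, fun lam mu hlam hmu => ?_⟩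
  obtain ⟨M, hM⟩ := exists_nat_ge (mu * s)
  obtain ⟨C, hC⟩ := hC M
  refine ⟨C ^ N, fun α x => ?_⟩
  have hexp : Real.exp (mu * ω ‖x‖) ≤ (1 + ‖x‖) ^ M := by
    have hω : ω ‖x‖ ≤ s * Real.log (1 + ‖x‖) := by
      rcases le_total ‖x‖ 1 with hx | hx
      · rw [hvan _ ⟨norm_nonneg x, hx⟩]
        exact mul_nonneg hs0 (Real.log_nonneg (by linarith [norm_nonneg x]))
      · have := hs (Real.log ‖x‖) (Real.log_nonneg hx)
        rw [Real.exp_log (by linarith)] at this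
        refine this.trans ?_
        gcongr
        linarith
    have hlog : 0 ≤ Real.log (1 + ‖x‖) := Real.log_nonneg (by linarith [norm_nonneg x])
    calc Real.exp (mu * ω ‖x‖) ≤ Real.exp (M * Real.log (1 + ‖x‖)) := by
          refine Real.exp_le_exp.2 ?_
          calc mu * ω ‖x‖ ≤ mu * (s * Real.log (1 + ‖x‖)) := by gcongr
            _ = (mu * s) * Real.log (1 + ‖x‖) := by ring
            _ ≤ _ := by gcongr
      _ = (1 + ‖x‖) ^ M := by rw [Real.exp_nat_mul, Real.exp_log (by positivity)]
  have hone : ∀ S : Finset (Fin N), 1 + ∑ i ∈ S, |x i| ≤ ∏ i ∈ S, (1 + |x i|) := by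
    intro S
    induction S using Finset.induction_on with
    | empty => simp
    | insert i S hi ih =>
      rw [Finset.sum_insert hi, Finset.prod_insert hi]
      have h1 := abs_nonneg (x i)
      have h2 : 0 ≤ ∑ i ∈ S, |x i| := Finset.sum_nonneg fun i _ => abs_nonneg _
      nlinarith
  calc Real.exp (mu * ω ‖x‖) * |∏ i, h (α i) (x i)|
      ≤ (∏ i, (1 + |x i|)) ^ M * |∏ i, h (α i) (x i)| := by
        gcongr
        refine hexp.trans ?_
        gcongr
        exact (by gcongr; exact euc_norm_le_sum x : 1 + ‖x‖ ≤ _).trans (hone Finset.univ)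
    _ = ∏ i, (|h (α i) (x i)| * (1 + |x i|) ^ M) := by
        rw [Finset.abs_prod, ← Finset.prod_pow, ← Finset.prod_mul_distrib]
        exact Finset.prod_congr rfl fun i _ => mul_comm _ _
    _ ≤ ∏ _i : Fin N, C :=
        Finset.prod_le_prod (fun _ _ => by positivity) fun i _ => hC _ _
    _ = C ^ N := by simp
    _ ≤ C ^ N * Real.exp (lam * phiStar ω (msize α / lam)) := by
        refine le_mul_of_one_le_right ?_ (Real.one_le_exp
          (mul_nonneg hlam.le (phiStar_nonneg (hvan 1 (by simp)) _)))
        exact pow_nonneg (le_trans (by positivity) (hC 0 0)) _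

/-- For every sequence `z` there is a function in `𝒮_ω` that is at least of size
`2^{-j} exp (-j ω(z_j))` at `z_j`. -/
theorem exists_memS_ge {ω : ℝ → ℝ} (hω : IsWeightFun ω)
    (hvan : ∀ t ∈ Set.Icc (0 : ℝ) 1, ω t = 0) {N : ℕ} (z : ℕ → Euc N) :
    ∃ g : Euc N → ℝ, MemS ω g ∧ ∃ δ : ℝ, 0 < δ ∧
      ∀ j : ℕ, δ * ((1 / 2) ^ j * Real.exp (-(j * ω ‖z j‖))) ≤ g (z j) := by
  have h1 : ω 1 = 0 := hvan 1 (by simp)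
  obtain ⟨h, hh, hd⟩ : ∃ h : ℕ → ℝ → ℝ, IsDerivFamily h ∧
      HasWeightedDecay ω (fun (α : Fin N → ℕ) (x : Euc N) => ∏ i, h (α i) (x i)) := by
    rcases hω.bddAbove_or_le_mul h1 with hb | ⟨s, hs0, hs⟩
    · exact exists_family_of_bddAbove hω h1 hb N
    · exact exists_family_of_le_mul hvan hs0 hs N
  have hE := hh.isPartialFamily N
  set E : (Fin N → ℕ) → Euc N → ℝ := fun α x => ∏ i, h (α i) (x i) with hEdef
  have hB := hd.exists_bound hω
  have hc0 : ∀ j : ℕ, 0 ≤ (1 / 2 : ℝ) ^ j * Real.exp (-(j * ω ‖z j‖)) := fun j => by positivity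
  have hc : Summable fun j : ℕ => (1 / 2 : ℝ) ^ j * Real.exp (-(j * ω ‖z j‖)) := by
    refine Summable.of_nonneg_of_le hc0 (fun j => ?_) summable_geometric_two
    refine mul_le_of_le_one_right (by positivity) (Real.exp_le_one_iff.2 ?_)
    have := hω.nonneg _ (norm_nonneg (z j))
    have : 0 ≤ (j : ℝ) * ω ‖z j‖ := by positivity
    linarith
  refine ⟨_, (hE.tsum_translate hB hc hc0 z).memS (hd.tsum_translate hω z), E 0 0, ?_,
    fun j => ?_⟩
  · exact Finset.prod_pos fun i _ => by simpa using hh.pos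
  · obtain ⟨B, hB⟩ := hB 0
    have hsm : Summable fun i : ℕ =>
        (1 / 2 : ℝ) ^ i * Real.exp (-(i * ω ‖z i‖)) * E 0 (z j - z i) := by
      refine Summable.of_norm_bounded (hc.mul_right B) fun i => ?_
      rw [norm_mul, Real.norm_of_nonneg (hc0 i)]
      exact mul_le_mul_of_nonneg_left (hB _) (hc0 i)
    have hle := hsm.le_tsum j fun i _ =>
      mul_nonneg (hc0 i) (Finset.prod_nonneg fun l _ => by simpa using hh.nonneg _)
    rw [sub_self, mul_comm] at hle
    exact hle

theorem memOM_iff_qg_finite {N : ℕ} (ω : ℝ → ℝ) (hω : IsWeightFun ω)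
    (hvan : ∀ t ∈ Set.Icc (0:ℝ) 1, ω t = 0)
    (f : Euc N → ℝ) (hf : ContDiff ℝ (⊤ : ℕ∞) f) :
    MemOM ω f ↔ ∀ g : Euc N → ℝ, MemS ω g → ∀ m : ℕ, 0 < m → qgBdd ω m g f := by
  constructor
  · rintro ⟨-, hOM⟩ g ⟨-, hg⟩ m hm
    obtain ⟨C, hC, n, hn⟩ := hOM m hm
    obtain ⟨C', hC'⟩ := hg 1 (n + 1) one_pos (by positivity)
    refine ⟨C' * Real.exp (1 * phiStar ω (msize (0 : Fin N → ℕ) / 1)) * C, ?_⟩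
    rintro _ ⟨⟨α, x⟩, rfl⟩
    have h0 : pdm (0 : Fin N → ℕ) g = g := by
      have hid : ∀ k : ℕ, (List.replicate k (id : (Euc N → ℝ) → Euc N → ℝ)).foldr (· ∘ ·) id = id :=
        fun k => by induction k <;> simp_all [List.replicate_succ]
      simp [pdm, hid]
    have h1 := hC' 0 x
    rw [h0] at h1
    have hx := hω.nonneg _ (norm_nonneg x)
    calc |g x| * |pdm α f x| * Real.exp (-(m : ℝ) * phiStar ω (msize α / m))
        ≤ |g x| * (C * Real.exp (n * ω ‖x‖ + m * phiStar ω (msize α / m)))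
          * Real.exp (-(m : ℝ) * phiStar ω (msize α / m)) := by gcongr; exact hn α x
      _ = |g x| * C * (Real.exp (n * ω ‖x‖ + m * phiStar ω (msize α / m))
          * Real.exp (-(m : ℝ) * phiStar ω (msize α / m))) := by ring
      _ = (Real.exp (n * ω ‖x‖) * |g x|) * C := by
          rw [← Real.exp_add]; ring_nf
      _ ≤ (Real.exp ((n + 1) * ω ‖x‖) * |g x|) * C := by gcongr; linarith
      _ ≤ _ := by gcongr
  · intro H
    refine ⟨hf, fun m hm => ?_⟩
    by_contra! hcon
    choose α z hz using fun j : ℕ => hcon (j * 2 ^ j + 1) (by positivity) j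
    obtain ⟨g, hg, δ, hδ, hge⟩ := exists_memS_ge hω hvan z
    obtain ⟨B, hB⟩ := H g hg m hm
    obtain ⟨j, hj⟩ := exists_nat_gt (B / δ)
    rw [div_lt_iff₀' hδ] at hj
    have hbj : |g (z j)| * |pdm (α j) f (z j)| *
        Real.exp (-(m : ℝ) * phiStar ω (msize (α j) / m)) ≤ B := hB ⟨(α j, z j), rfl⟩
    refine hj.not_ge (le_trans ?_ hbj)
    set P := (m : ℝ) * phiStar ω (msize (α j) / m) with hP
    have e1 : Real.exp (-(j * ω ‖z j‖)) * Real.exp (j * ω ‖z j‖ + P) * Real.exp (-P) = 1 := by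
      rw [← Real.exp_add, ← Real.exp_add]; simp
    have e2 : (1 / 2 : ℝ) ^ j * 2 ^ j = 1 := by rw [← mul_pow]; norm_num
    calc δ * j = δ * (((1 / 2) ^ j * 2 ^ j) * j) *
          (Real.exp (-(j * ω ‖z j‖)) * Real.exp (j * ω ‖z j‖ + P) * Real.exp (-P)) := by
          rw [e1, e2]; ring
      _ = δ * ((1 / 2) ^ j * Real.exp (-(j * ω ‖z j‖))) *
          (j * 2 ^ j * Real.exp (j * ω ‖z j‖ + P)) * Real.exp (-P) := by ring
      _ ≤ |g (z j)| * |pdm (α j) f (z j)| * Real.exp (-P) := by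
          gcongr
          · exact (hge j).trans (le_abs_self _)
          · refine le_trans ?_ (hz j).le
            gcongr
            linarith
      _ = _ := by rw [hP, neg_mul]
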